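/- Let I ⊆ ℝ be an open interval, ŝ₀ ∈ I, and let Y₀, Z₀ ∈ ℂ^{n×n} with Y₀ invertible such that H₀ := Z₀Y₀⁻¹ is symmetric with Im H₀ positive definite. Suppose Y, Z : I → ℂ^{n×n} are differentiable and satisfy Y'(s) = C Z(s) and Z'(s) = −D(s) Y(s) for all s ∈ I, with Y(ŝ₀) = Y₀ and Z(ŝ₀) = Z₀, and suppose Y(s) is invertible for every s ∈ I. Then H(s) := Z(s) Y(s)⁻¹ is differentiable on I, H(ŝ₀) = H₀, H(s) is symmetric with Im H(s) positive definite for all s ∈ I, and H solves the Riccati equation (d/ds)H(s) + H(s) C H(s) + D(s) = 0 on I. -/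

import Mathlib

open Matrix

attribute [local instance] Matrix.normedAddCommGroup Matrix.normedSpace

/-- The constant `n × n` matrix `C` with `C₁₁ = 0`, `C_jj = 2` for `j = 2, …, n`
and `C_jk = 0` off the diagonal (indices in `Fin n`, where `0 : Fin n`
corresponds to the index `1`). -/
def riccatiC (n : ℕ) : Matrix (Fin n) (Fin n) ℂ :=
  Matrix.of fun j k => if j = k ∧ (j : ℕ) ≠ 0 then 2 else 0

/-- `H` is a differentiable solution of the Riccati equation
`(d/ds) H + H C H + D = 0` on the set `I`. -/
def IsRiccatiSol (n : ℕ) (I : Set ℝ) (D : ℝ → Matrix (Fin n) (Fin n) ℝ)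
    (H : ℝ → Matrix (Fin n) (Fin n) ℂ) : Prop :=
  ∀ s ∈ I, HasDerivAt H (-(H s * riccatiC n * H s + (D s).map (fun x => (x : ℂ)))) s

section RiccatiHelpers

variable {n : ℕ}

theorem rh_entry {A : ℝ → Matrix (Fin n) (Fin n) ℂ} {A' : Matrix (Fin n) (Fin n) ℂ} {s : ℝ} :
    HasDerivAt A A' s ↔ ∀ i j, HasDerivAt (fun t => A t i j) (A' i j) s := by
  constructor
  · intro h i j
    exact hasDerivAt_pi.1 (hasDerivAt_pi.1 h i) j
  · intro h
    exact hasDerivAt_pi.2 fun i => hasDerivAt_pi.2 fun j => h i j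

theorem rh_mul {A B : ℝ → Matrix (Fin n) (Fin n) ℂ} {A' B' : Matrix (Fin n) (Fin n) ℂ} {s : ℝ}
    (hA : HasDerivAt A A' s) (hB : HasDerivAt B B' s) :
    HasDerivAt (fun t => A t * B t) (A' * B s + A s * B') s := by
  rw [rh_entry] at *
  intro i j
  simp only [Matrix.add_apply, Matrix.mul_apply, ← Finset.sum_add_distrib]
  exact HasDerivAt.fun_sum fun k _ => (hA i k).mul (hB k j)

theorem rh_sub_zero {A B : ℝ → Matrix (Fin n) (Fin n) ℂ} {A' B' : Matrix (Fin n) (Fin n) ℂ}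
    {s : ℝ} (hA : HasDerivAt A A' s) (hB : HasDerivAt B B' s) (h : A' = B') :
    HasDerivAt (fun t => A t - B t) 0 s := by
  subst h
  rw [rh_entry] at *
  intro i j
  simpa using (hA i j).fun_sub (hB i j)

theorem rh_transpose {A : ℝ → Matrix (Fin n) (Fin n) ℂ} {A' : Matrix (Fin n) (Fin n) ℂ} {s : ℝ}
    (hA : HasDerivAt A A' s) : HasDerivAt (fun t => (A t)ᵀ) A'ᵀ s := by
  rw [rh_entry] at *
  exact fun i j => hA j i

theorem rh_conjTranspose {A : ℝ → Matrix (Fin n) (Fin n) ℂ} {A' : Matrix (Fin n) (Fin n) ℂ}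
    {s : ℝ} (hA : HasDerivAt A A' s) : HasDerivAt (fun t => (A t)ᴴ) A'ᴴ s := by
  rw [rh_entry] at *
  exact fun i j => (hA j i).star

theorem rh_det {A : ℝ → Matrix (Fin n) (Fin n) ℂ} {s : ℝ}
    (hA : ∀ i j, DifferentiableAt ℝ (fun t => A t i j) s) :
    DifferentiableAt ℝ (fun t => (A t).det) s := by
  simp only [Matrix.det_apply]
  refine DifferentiableAt.fun_sum fun σ _ => ?_
  refine DifferentiableAt.const_smul (c := Equiv.Perm.sign σ) ?_
  exact DifferentiableAt.fun_finsetProd fun i _ => hA _ _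

theorem rh_inv {A : ℝ → Matrix (Fin n) (Fin n) ℂ} {A' : Matrix (Fin n) (Fin n) ℂ} {s : ℝ}
    (hA : HasDerivAt A A' s) (hu : IsUnit (A s)) :
    ∃ B', HasDerivAt (fun t => (A t)⁻¹) B' s := by
  have hA2 : ∀ i j, DifferentiableAt ℝ (fun t => A t i j) s :=
    fun i j => (rh_entry.1 hA i j).differentiableAt
  have hdet : (A s).det ≠ 0 := ((Matrix.isUnit_iff_isUnit_det _).1 hu).ne_zero
  have key : ∀ i j, DifferentiableAt ℝ (fun t => (A t)⁻¹ i j) s := by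
    intro i j
    simp only [Matrix.inv_def, Matrix.smul_apply, Ring.inverse_eq_inv', smul_eq_mul,
      Matrix.adjugate_apply]
    refine ((rh_det hA2).fun_inv hdet).fun_mul (rh_det fun k l => ?_)
    by_cases h : k = j
    · subst h; simp
    · simpa [Matrix.updateRow_ne h] using hA2 k l
  exact ⟨Matrix.of fun i j => deriv (fun t => (A t)⁻¹ i j) s,
    rh_entry.2 fun i j => (key i j).hasDerivAt⟩

theorem rh_const {A : ℝ → Matrix (Fin n) (Fin n) ℂ} {I : Set ℝ} (hI : IsOpen I)
    (hc : I.OrdConnected) (hA : ∀ s ∈ I, HasDerivAt A 0 s) {s t : ℝ} (hs : s ∈ I) (ht : t ∈ I) :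
    A s = A t := by
  ext i j
  refine hI.is_const_of_deriv_eq_zero (f := fun t => A t i j) hc.isPreconnected
    (fun x hx => ?_) (fun x hx => ?_) hs ht
  · exact (rh_entry.1 (hA x hx) i j).differentiableAt.differentiableWithinAt
  · exact (rh_entry.1 (hA x hx) i j).deriv

open scoped ComplexOrder in
theorem rh_posDef_complex {M : Matrix (Fin n) (Fin n) ℝ} (hM : M.PosDef) :
    (M.map (fun x => (x : ℂ))).PosDef := by
  have hsym : ∀ i j, M i j = M j i := fun i j => by simpa using hM.1.apply j i
  refine .of_dotProduct_mulVec_pos ?_ fun x hx => ?_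
  · ext i j
    simp [hsym i j]
  · have h1 : star x ⬝ᵥ (M.map (fun x => (x : ℂ)) *ᵥ x) =
        (((fun i => (x i).re) ⬝ᵥ (M *ᵥ fun i => (x i).re) +
          (fun i => (x i).im) ⬝ᵥ (M *ᵥ fun i => (x i).im) : ℝ) : ℂ) := by
      apply Complex.ext
      · simp only [dotProduct, mulVec, Complex.re_sum, Complex.ofReal_re, Finset.mul_sum,
          ← Finset.sum_add_distrib]
        refine Finset.sum_congr rfl fun i _ => Finset.sum_congr rfl fun j _ => ?_
        simp
      · simp only [dotProduct, mulVec, Complex.im_sum, Complex.ofReal_im, Finset.mul_sum]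
        have h2 : ∀ i j, (star x i * (M.map (fun x => (x : ℂ)) i j * x j)).im =
          M i j * (x i).re * (x j).im - M i j * (x i).im * (x j).re := by
          intro i j
          simp; ring
        simp only [h2, Finset.sum_sub_distrib]
        rw [sub_eq_zero, Finset.sum_comm]
        refine Finset.sum_congr rfl fun i _ => Finset.sum_congr rfl fun j _ => ?_
        rw [hsym i j]; ring
    rw [h1]
    have hnn : ∀ u : Fin n → ℝ, 0 ≤ u ⬝ᵥ (M *ᵥ u) := fun u => by
      simpa using hM.posSemidef.dotProduct_mulVec_nonneg u
    have hpos : ∀ u : Fin n → ℝ, u ≠ 0 → 0 < u ⬝ᵥ (M *ᵥ u) := fun u hu => by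
      simpa using hM.dotProduct_mulVec_pos hu
    rw [Complex.zero_lt_real]
    by_cases hr : (fun i => (x i).re) = 0
    · have hi : (fun i => (x i).im) ≠ 0 := by
        intro hi
        apply hx
        ext i
        exact Complex.ext (congrFun hr i) (congrFun hi i)
      exact add_pos_of_nonneg_of_pos (hnn _) (hpos _ hi)
    · exact add_pos_of_pos_of_nonneg (hpos _ hr) (hnn _)

open scoped ComplexOrder in
theorem rh_posDef_real {M : Matrix (Fin n) (Fin n) ℝ}
    (hM : (M.map (fun x => (x : ℂ))).PosDef) : M.PosDef := by
  refine .of_dotProduct_mulVec_pos ?_ fun x hx => ?_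
  · ext i j
    have := hM.1.apply i j
    simpa using this
  · have hx' : (fun i => (x i : ℂ)) ≠ 0 := by
      intro h
      apply hx
      ext i
      simpa using congrFun h i
    have := hM.dotProduct_mulVec_pos hx'
    rw [← Complex.zero_lt_real]
    convert this using 1
    simp [dotProduct, mulVec]

theorem rh_im {H : Matrix (Fin n) (Fin n) ℂ} (hH : H.IsSymm) :
    H - Hᴴ = (2 * Complex.I) • ((H.map Complex.im).map (fun x => (x : ℂ))) := by
  ext i j
  have : H j i = H i j := hH.apply i j
  simp only [Matrix.sub_apply, Matrix.conjTranspose_apply, this, Matrix.smul_apply,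
    Matrix.map_apply, smul_eq_mul]
  apply Complex.ext <;> simp
  ring

end RiccatiHelpers

/-- If `Y, Z` solve the linear system `Y' = C Z`, `Z' = -D Y` on an
open interval `I` with `Y(ŝ₀) = Y₀` invertible, `Z(ŝ₀) = Z₀`, `H₀ = Z₀ Y₀⁻¹` symmetric
with positive definite imaginary part, and `Y(s)` is invertible on `I`, then
`H(s) = Z(s) Y(s)⁻¹` is differentiable, matches the initial value, is symmetric with
positive definite imaginary part, and solves the Riccati equation `H' + HCH + D = 0` on `I`. -/
theorem ZYinv_solves_riccati
    (n : ℕ) (hn : 1 ≤ n) (I : Set ℝ) (hIopen : IsOpen I) (hIconn : I.OrdConnected)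
    (D : ℝ → Matrix (Fin n) (Fin n) ℝ) (hDcont : ContinuousOn D I)
    (hDsymm : ∀ s ∈ I, (D s).IsSymm)
    (s₀ : ℝ) (hs₀ : s₀ ∈ I)
    (Y₀ Z₀ : Matrix (Fin n) (Fin n) ℂ) (hY₀ : IsUnit Y₀)
    (hH₀symm : (Z₀ * Y₀⁻¹).IsSymm)
    (hH₀pos : ((Z₀ * Y₀⁻¹).map Complex.im).PosDef)
    (Y Z : ℝ → Matrix (Fin n) (Fin n) ℂ)
    (hY : ∀ s ∈ I, HasDerivAt Y (riccatiC n * Z s) s)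
    (hZ : ∀ s ∈ I, HasDerivAt Z (-((D s).map (fun x => (x : ℂ)) * Y s)) s)
    (hY0 : Y s₀ = Y₀) (hZ0 : Z s₀ = Z₀)
    (hYinv : ∀ s ∈ I, IsUnit (Y s)) :
    Z s₀ * (Y s₀)⁻¹ = Z₀ * Y₀⁻¹ ∧
    IsRiccatiSol n I D (fun s => Z s * (Y s)⁻¹) ∧
    ∀ s ∈ I, (Z s * (Y s)⁻¹).IsSymm ∧ ((Z s * (Y s)⁻¹).map Complex.im).PosDef := by
  have hCt : (riccatiC n)ᵀ = riccatiC n := by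
    ext i j
    simp only [riccatiC, Matrix.transpose_apply, Matrix.of_apply]
    by_cases h : i = j
    · subst h; rfl
    · simp [h, Ne.symm h]
  have hCh : (riccatiC n)ᴴ = riccatiC n := by
    rw [← hCt]
    ext i j
    simp only [riccatiC, Matrix.conjTranspose_apply, Matrix.transpose_apply, Matrix.of_apply]
    by_cases h : i = j
    · subst h; split_ifs <;> simp
    · simp [h, Ne.symm h]
  have hDt : ∀ s ∈ I, ((D s).map (fun x => (x : ℂ)))ᵀ = (D s).map (fun x => (x : ℂ)) := by
    intro s hs
    ext i j
    simp [(hDsymm s hs).apply i j]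
  have hDh : ∀ s ∈ I, ((D s).map (fun x => (x : ℂ)))ᴴ = (D s).map (fun x => (x : ℂ)) := by
    intro s hs
    ext i j
    simp [(hDsymm s hs).apply i j]
  have hdet : ∀ s ∈ I, IsUnit (Y s).det :=
    fun s hs => (Matrix.isUnit_iff_isUnit_det _).1 (hYinv s hs)
  have hHY : ∀ s ∈ I, Z s * (Y s)⁻¹ * Y s = Z s := fun s hs =>
    Matrix.nonsing_inv_mul_cancel_right _ _ (hdet s hs)
  -- the two conserved quantities
  have hcons1 : ∀ s ∈ I, (Y s)ᵀ * Z s - (Z s)ᵀ * Y s = (Y s₀)ᵀ * Z s₀ - (Z s₀)ᵀ * Y s₀ := by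
    intro s hs
    refine rh_const (A := fun s => (Y s)ᵀ * Z s - (Z s)ᵀ * Y s) hIopen hIconn
      (fun t ht => ?_) hs hs₀
    refine rh_sub_zero (rh_mul (rh_transpose (hY t ht)) (hZ t ht))
      (rh_mul (rh_transpose (hZ t ht)) (hY t ht)) ?_
    rw [Matrix.transpose_neg, Matrix.transpose_mul, Matrix.transpose_mul, hCt, hDt t ht]
    noncomm_ring
  have hcons2 : ∀ s ∈ I, (Y s)ᴴ * Z s - (Z s)ᴴ * Y s = (Y s₀)ᴴ * Z s₀ - (Z s₀)ᴴ * Y s₀ := by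
    intro s hs
    refine rh_const (A := fun s => (Y s)ᴴ * Z s - (Z s)ᴴ * Y s) hIopen hIconn
      (fun t ht => ?_) hs hs₀
    refine rh_sub_zero (rh_mul (rh_conjTranspose (hY t ht)) (hZ t ht))
      (rh_mul (rh_conjTranspose (hZ t ht)) (hY t ht)) ?_
    rw [Matrix.conjTranspose_neg, Matrix.conjTranspose_mul, Matrix.conjTranspose_mul, hCh,
      hDh t ht]
    noncomm_ring
  have hq1 : ∀ s ∈ I, (Y s)ᵀ * Z s - (Z s)ᵀ * Y s =
      (Y s)ᵀ * (Z s * (Y s)⁻¹ - (Z s * (Y s)⁻¹)ᵀ) * Y s := by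
    intro s hs
    have h1 := hHY s hs
    generalize Z s * (Y s)⁻¹ = H at *
    rw [← h1, Matrix.transpose_mul]
    noncomm_ring
  have hq2 : ∀ s ∈ I, (Y s)ᴴ * Z s - (Z s)ᴴ * Y s =
      (Y s)ᴴ * (Z s * (Y s)⁻¹ - (Z s * (Y s)⁻¹)ᴴ) * Y s := by
    intro s hs
    have h1 := hHY s hs
    generalize Z s * (Y s)⁻¹ = H at *
    rw [← h1, Matrix.conjTranspose_mul]
    noncomm_ring
  have hH0 : Z s₀ * (Y s₀)⁻¹ = Z₀ * Y₀⁻¹ := by rw [hY0, hZ0]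
  have hsymm : ∀ s ∈ I, (Z s * (Y s)⁻¹).IsSymm := by
    intro s hs
    have h1 := hcons1 s hs
    rw [hq1 s hs, hq1 s₀ hs₀, hH0, hH₀symm.eq, sub_self, Matrix.mul_zero, Matrix.zero_mul] at h1
    have h2 := (hYinv s hs).mul_left_eq_zero.1 h1
    have hYt : IsUnit (Y s)ᵀ := by
      rw [Matrix.isUnit_iff_isUnit_det, Matrix.det_transpose]
      exact hdet s hs
    exact (sub_eq_zero.1 (hYt.mul_right_eq_zero.1 h2)).symm
  refine ⟨hH0, ?_, fun s hs => ⟨hsymm s hs, ?_⟩⟩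
  · intro s hs
    obtain ⟨B', hB'⟩ := rh_inv (hY s hs) (hYinv s hs)
    have hH := rh_mul (hZ s hs) hB'
    generalize -((D s).map (fun x => (x : ℂ)) * Y s) * (Y s)⁻¹ + Z s * B' = H' at hH
    have h1 := rh_mul hH (hY s hs)
    have h2 : HasDerivAt (fun t => Z t * (Y t)⁻¹ * Y t)
        (-((D s).map (fun x => (x : ℂ)) * Y s)) s := by
      refine (hZ s hs).congr_of_eventuallyEq ?_
      filter_upwards [hIopen.mem_nhds hs] with t ht using hHY t ht
    have h3 := h1.unique h2
    have h4 : H' = -(Z s * (Y s)⁻¹ * riccatiC n * (Z s * (Y s)⁻¹) +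
        (D s).map (fun x => (x : ℂ))) := by
      apply (hYinv s hs).mul_right_cancel
      have h5 := hHY s hs
      rw [eq_sub_of_add_eq h3, neg_mul, add_mul, Matrix.mul_assoc (_ * riccatiC n), h5]
      noncomm_ring
    exact h4 ▸ hH
  · have h1 := hcons2 s hs
    rw [hq2 s hs, hq2 s₀ hs₀, rh_im (hsymm s hs), rh_im (hsymm s₀ hs₀), Matrix.mul_smul,
      Matrix.mul_smul, Matrix.smul_mul, Matrix.smul_mul] at h1
    have h2 := smul_right_injective _ (by simp : (2 * Complex.I) ≠ 0) h1
    open scoped ComplexOrder in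
    apply rh_posDef_real
    open scoped ComplexOrder in
    rw [← (hYinv s hs).posDef_star_left_conjugate_iff, Matrix.star_eq_conjTranspose, h2,
      ← Matrix.star_eq_conjTranspose, (hYinv s₀ hs₀).posDef_star_left_conjugate_iff, hH0]
    exact rh_posDef_complex hH₀pos
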